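/- arXiv:math/0506058 — 2 statements merged into one kernel-verified Lean document; each statement's English description precedes it below -/
import Mathlib

section
/- Let R = 𝔽_p[u,v,w,x,y,z] for a prime p, and let I be the ideal of 2×2 minors of the matrix with rows (u,v,w), (x,y,z). Then H^3_I(R) = 0. -/
/-!
STATEMENT 6: Let `R = 𝔽_p[u,v,w,x,y,z]` and `I` the ideal of `2×2` minors of the
matrix with rows `(u,v,w)`, `(x,y,z)`.  Then `H^3_I(R) = 0`.
-/

open CategoryTheory MvPolynomial


/-- The length two complex. -/
noncomputable def hbComplex {V : Type*} [Category V] [Abelian V]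
    {A B C : V} (f : A ⟶ B) (g : B ⟶ C) (hfg : f ≫ g = 0) :
    ChainComplex V ℕ :=
  ChainComplex.augment (ChainComplex.augment ((ChainComplex.single₀ V).obj A) f
    (by rw [HomologicalComplex.single_obj_d]; exact Limits.zero_comp)) g
    (by simpa using! hfg)

lemma hb_isZero_ext {R : Type} [CommRing R] {A B C M : ModuleCat.{0} R} (f : A ⟶ B) (g : B ⟶ C)
    (h : C ⟶ M) [Projective A] [Projective B] [Projective C]
    (hfg : f ≫ g = 0) (hgh : g ≫ h = 0) (hf : Mono f) (hh : Epi h)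
    (e1 : (ShortComplex.mk f g hfg).Exact) (e2 : (ShortComplex.mk g h hgh).Exact)
    (N : ModuleCat.{0} R) :
    Limits.IsZero (((Ext R (ModuleCat.{0} R) 3).obj (Opposite.op M)).obj N) := by
  have hz : ∀ n, Limits.IsZero ((hbComplex f g hfg).X (n + 3)) := fun n =>
    HomologicalComplex.isZero_single_obj_X (ComplexShape.down ℕ) 0 A (n + 1) (by simp)
  let P : ProjectiveResolution M :=
    { complex := hbComplex f g hfg
      projective := by
        rintro (_ | _ | _ | n)
        · assumption
        · assumption
        · assumption
        · exact (hz n).projective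
      π := (ChainComplex.toSingle₀Equiv _ _).symm ⟨h, hgh⟩
      quasiIso := ⟨fun n => by
        cases n with
        | zero =>
          rw [ChainComplex.quasiIsoAt₀_iff, ShortComplex.quasiIso_iff_of_zeros']
          · refine (ShortComplex.exact_and_epi_g_iff_of_iso ?_).2 ⟨e2, hh⟩
            exact ShortComplex.isoMk (Iso.refl _) (Iso.refl _) (Iso.refl _)
              (by simp; rfl)
              ((Category.id_comp h).trans ((ChainComplex.toSingle₀Equiv_symm_apply_f_zero
                (C := hbComplex f g hfg) h hgh).symm.trans (Category.comp_id _).symm))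
          all_goals rfl
        | succ n =>
          rw [quasiIsoAt_iff_exactAt']
          · rw [HomologicalComplex.exactAt_iff' _ (n + 1 + 1) (n + 1) n (by simp) (by simp)]
            match n with
            | 0 => exact e1
            | 1 =>
              refine (ShortComplex.exact_iff_mono _ ?_).2 hf
              exact (hz 0).eq_of_src _ _
            | n + 2 => exact ShortComplex.exact_of_isZero_X₂ _ (hz n)
          · apply ChainComplex.exactAt_succ_single_obj⟩ }
  refine Limits.IsZero.of_iso ?_ (P.isoExt 3 N)
  rw [← HomologicalComplex.exactAt_iff_isZero_homology, HomologicalComplex.exactAt_iff]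
  refine ShortComplex.exact_of_isZero_X₂ _ ?_
  rw [Limits.IsZero.iff_id_eq_zero]
  ext (x : _ ⟶ _)
  obtain rfl : x = 0 := (hz 0).eq_of_src _ _
  rfl

lemma hb_ext_minors {R : Type} [CommRing R] [IsDomain R] (a b c d e f : R)
    (h3 : a * e - b * d ≠ 0)
    (hrel : ∀ s, a * e - b * d ∣ (b * f - c * e) * s → a * e - b * d ∣ s)
    (N : ModuleCat.{0} R) :
    Limits.IsZero (((Ext R (ModuleCat.{0} R) 3).obj (Opposite.op (ModuleCat.of R
      (R ⧸ (Ideal.span {b * f - c * e, c * d - a * f, a * e - b * d} : Ideal R))))).obj N) := by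
  let J : Ideal R := Ideal.span {b * f - c * e, c * d - a * f, a * e - b * d}
  let F : (R × R) →ₗ[R] (R × R × R) :=
    { toFun := fun r => (r.1 * a + r.2 * d, r.1 * b + r.2 * e, r.1 * c + r.2 * f)
      map_add' := by intros; ext <;> simp <;> ring
      map_smul' := by intros; ext <;> simp <;> ring }
  let G : (R × R × R) →ₗ[R] R :=
    { toFun := fun r => r.1 * (b * f - c * e) + r.2.1 * (c * d - a * f) + r.2.2 * (a * e - b * d)
      map_add' := by intros; simp; ring
      map_smul' := by intros; simp; ring }
  have hFG : ∀ r, G (F r) = 0 := by intro r; simp [F, G]; ring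
  have hGJ : ∀ r, G r ∈ J := fun r =>
    J.add_mem (J.add_mem (J.mul_mem_left _ (Ideal.subset_span (by simp)))
      (J.mul_mem_left _ (Ideal.subset_span (by simp))))
      (J.mul_mem_left _ (Ideal.subset_span (by simp)))
  have : Projective (ModuleCat.of R (R × R)) := (IsProjective.iff_projective _).1 inferInstance
  have : Projective (ModuleCat.of R (R × R × R)) := (IsProjective.iff_projective _).1 inferInstance
  have : Projective (ModuleCat.of R R) := (IsProjective.iff_projective _).1 inferInstance
  refine hb_isZero_ext (ModuleCat.ofHom F) (ModuleCat.ofHom G) (ModuleCat.ofHom J.mkQ)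
    ?_ ?_ ?_ ?_ ?_ ?_ N
  · ext1; exact LinearMap.ext hFG
  · ext1; exact LinearMap.ext fun r => (Submodule.Quotient.mk_eq_zero J).2 (hGJ r)
  · rw [ModuleCat.mono_iff_injective]
    refine (injective_iff_map_eq_zero F).2 ?_
    rintro ⟨r, s⟩ hrs
    simp only [F, LinearMap.coe_mk, AddHom.coe_mk, Prod.mk_eq_zero] at hrs
    obtain ⟨h1, h2, -⟩ := hrs
    have hr : r * (a * e - b * d) = 0 := by linear_combination e * h1 - d * h2
    have hs : s * (a * e - b * d) = 0 := by linear_combination a * h2 - b * h1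
    simp [h3] at hr hs
    simp [hr, hs]
  · rw [ModuleCat.epi_iff_surjective]
    exact J.mkQ_surjective
  · rw [ShortComplex.moduleCat_exact_iff]
    rintro ⟨r, s, t⟩ hr
    replace hr : r * (b * f - c * e) + s * (c * d - a * f) + t * (a * e - b * d) = 0 := hr
    obtain ⟨α, hα⟩ := hrel (r * e - s * d) ⟨s * f - t * e, by linear_combination e * hr⟩
    obtain ⟨β, hβ⟩ := hrel (s * a - r * b) ⟨t * b - s * c, by linear_combination -b * hr⟩
    refine ⟨(α, β), ?_⟩
    have k1 : α * a + β * d = r := mul_left_cancel₀ h3 (by linear_combination -a * hα - d * hβ)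
    have k2 : α * b + β * e = s := mul_left_cancel₀ h3 (by linear_combination -b * hα - e * hβ)
    have k3 : α * c + β * f = t := mul_left_cancel₀ h3 (by
      linear_combination -c * hα - f * hβ - hr)
    exact Prod.ext k1 (Prod.ext k2 k3)
  · rw [ShortComplex.moduleCat_exact_iff]
    intro r hr
    replace hr : r ∈ J := (Submodule.Quotient.mk_eq_zero J).1 hr
    rw [Ideal.mem_span_insert] at hr
    obtain ⟨x, y, hy, rfl⟩ := hr
    obtain ⟨y, z, rfl⟩ := Ideal.mem_span_pair.1 hy
    exact ⟨(x, y, z), add_assoc _ _ _⟩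

lemma hb_relPrime (p : ℕ) [Fact p.Prime] :
    IsRelPrime (X 0 * X 4 - X 1 * X 3 : MvPolynomial (Fin 6) (ZMod p))
      (X 1 * X 5 - X 2 * X 4) := by
  have hv : ∀ i j : Fin 6, (i : Fin 6) ≠ j → i ∉ (X j : MvPolynomial (Fin 6) (ZMod p)).vars := by
    intro i j h; simp [vars_X, h]
  have hirr : Irreducible (X 4 * X 0 + (-(X 1 * X 3)) : MvPolynomial (Fin 6) (ZMod p)) := by
    apply irreducible_mul_X_add
    · exact X_ne_zero _
    · exact hv _ _ (by decide)
    · rw [vars_neg]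
      intro h
      have := vars_mul _ _ h
      simp [vars_X] at this
    · rw [IsRelPrime.neg_right_iff]
      rw [(X_prime (R := ZMod p) (i := (4 : Fin 6))).irreducible.isRelPrime_iff_not_dvd]
      intro h
      rcases (X_prime (R := ZMod p) (i := (4 : Fin 6))).dvd_or_dvd h with h | h <;>
        simp [X_dvd_X] at h
  have : (X 4 * X 0 + (-(X 1 * X 3)) : MvPolynomial (Fin 6) (ZMod p))
    = X 0 * X 4 - X 1 * X 3 := by ring
  rw [this] at hirr
  rw [hirr.isRelPrime_iff_not_dvd]
  rintro ⟨t, ht⟩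
  have := congrArg (MvPolynomial.eval ![0, 1, 0, 0, 0, 1]) ht
  simp at this

lemma hb_exists (p : ℕ) [Fact p.Prime] (I : Ideal (MvPolynomial (Fin 6) (ZMod p)))
    (hI : I = Ideal.span {X 1 * X 5 - X 2 * X 4, X 2 * X 3 - X 0 * X 5, X 0 * X 4 - X 1 * X 3})
    (t : ℕ) : ∃ s, t ≤ s ∧ ∃ J : Ideal (MvPolynomial (Fin 6) (ZMod p)), I ^ s ≤ J ∧ J ≤ I ^ t ∧
      Limits.IsZero (((Ext (MvPolynomial (Fin 6) (ZMod p))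
        (ModuleCat.{0} (MvPolynomial (Fin 6) (ZMod p))) 3).obj (Opposite.op (ModuleCat.of _
      (_ ⧸ J)))).obj (ModuleCat.of _ (MvPolynomial (Fin 6) (ZMod p)))) := by
  set R := MvPolynomial (Fin 6) (ZMod p)
  have hq : t ≤ p ^ t := (Nat.lt_pow_self (Fact.out : p.Prime).one_lt).le
  have hfr : ∀ a b c d : R, a ^ p ^ t * b ^ p ^ t - c ^ p ^ t * d ^ p ^ t
      = (a * b - c * d) ^ p ^ t := by
    intro a b c d
    rw [sub_pow_char_pow, mul_pow, mul_pow]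
  have key := hb_ext_minors (X 0 ^ p ^ t : R) (X 1 ^ p ^ t) (X 2 ^ p ^ t) (X 3 ^ p ^ t)
    (X 4 ^ p ^ t) (X 5 ^ p ^ t)
  have hrp := hb_relPrime p
  have key2 := key (by rw [hfr]; exact pow_ne_zero _ (by
      intro h
      have := congrArg (MvPolynomial.eval ![1, 0, 0, 0, 1, 0]) h
      simp at this)) (fun s hs => by
      rw [hfr] at hs ⊢
      rw [hfr] at hs
      exact hrp.pow.dvd_of_dvd_mul_left hs)
    (ModuleCat.of _ R)
  obtain ⟨J, hJ⟩ : ∃ J : Ideal R, J = Ideal.span {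
    (X 1 ^ p ^ t * X 5 ^ p ^ t - X 2 ^ p ^ t * X 4 ^ p ^ t : R),
    X 2 ^ p ^ t * X 3 ^ p ^ t - X 0 ^ p ^ t * X 5 ^ p ^ t,
    X 0 ^ p ^ t * X 4 ^ p ^ t - X 1 ^ p ^ t * X 3 ^ p ^ t} := ⟨_, rfl⟩
  rw [← hJ] at key2
  rw [hfr, hfr, hfr] at hJ
  have hrad : I ≤ J.radical := by
    rw [hI, Ideal.span_le]
    rintro r (rfl | rfl | rfl) <;> exact ⟨p ^ t, hJ ▸ Ideal.subset_span (by simp)⟩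
  obtain ⟨k, hk⟩ := Ideal.exists_pow_le_of_le_radical_of_fg hrad (IsNoetherian.noetherian I)
  refine ⟨max t k, le_max_left _ _, J, (Ideal.pow_le_pow_right (le_max_right _ _)).trans hk, ?_,
    key2⟩
  refine le_trans ?_ (Ideal.pow_le_pow_right hq)
  rw [hJ, Ideal.span_le]
  rintro r (rfl | rfl | rfl) <;>
    exact Ideal.pow_mem_pow (hI ▸ Ideal.subset_span (by simp)) _

lemma hb_localCohomology {R : Type} [CommRing R] (I : Ideal R) (N : ModuleCat.{0} R) (n : ℕ)
    (H : ∀ t : ℕ, ∃ s, t ≤ s ∧ ∃ J : Ideal R, I ^ s ≤ J ∧ J ≤ I ^ t ∧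
      Limits.IsZero (((Ext R (ModuleCat.{0} R) n).obj (Opposite.op (ModuleCat.of R
      (R ⧸ J)))).obj N)) : Subsingleton ((localCohomology I n).obj N) := by
  let D := localCohomology.diagram (localCohomology.idealPowersDiagram I) n
  have hD : localCohomology I n = Limits.colimit D := rfl
  have hc := Limits.isColimitOfPreserves ((evaluation _ _).obj N) (Limits.colimit.isColimit D)
  rw [hD]
  apply ModuleCat.subsingleton_of_isZero
  rw [Limits.IsZero.iff_id_eq_zero]
  refine hc.hom_ext fun t => ?_
  suffices h : (Limits.colimit.ι D t).app N = 0 by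
    change (Limits.colimit.ι D t).app N ≫ _ = (Limits.colimit.ι D t).app N ≫ _
    rw [h]; simp
  obtain ⟨s, hs, J, h1, h2, hz⟩ := H t.unop.unop
  let φ : t ⟶ Opposite.op (Opposite.op s) := (homOfLE hs).op.op
  rw [← Limits.colimit.w D φ]
  let α : ModuleCat.of R (R ⧸ I ^ s) ⟶ ModuleCat.of R (R ⧸ J) :=
    ModuleCat.ofHom (Submodule.mapQ _ _ LinearMap.id h1)
  let β : ModuleCat.of R (R ⧸ J) ⟶ ModuleCat.of R (R ⧸ I ^ t.unop.unop) :=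
    ModuleCat.ofHom (Submodule.mapQ _ _ LinearMap.id h2)
  have hm : D.map φ = (Ext R (ModuleCat.{0} R) n).map β.op ≫
      (Ext R (ModuleCat.{0} R) n).map α.op := by
    rw [← Functor.map_comp, ← op_comp]
    change (Ext R (ModuleCat.{0} R) n).map _ = _
    congr 2
    apply Quiver.Hom.unop_inj
    apply ModuleCat.hom_ext
    apply Submodule.linearMap_qext
    rfl
  have h0 : ((Ext R (ModuleCat.{0} R) n).map β.op).app N = 0 := hz.eq_of_tgt _ _
  rw [NatTrans.comp_app, hm, NatTrans.comp_app, h0, Limits.zero_comp]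
  exact Limits.zero_comp

theorem localCohomology_three_of_minors_eq_zero_charP
    (p : ℕ) [Fact p.Prime] :
    let R := MvPolynomial (Fin 6) (ZMod p)
    let u : R := X 0; let v : R := X 1; let w : R := X 2
    let x : R := X 3; let y : R := X 4; let z : R := X 5
    let I : Ideal R := Ideal.span {v * z - w * y, w * x - u * z, u * y - v * x}
    Subsingleton ((localCohomology I 3).obj (ModuleCat.of R R)) := by
  intro R u v w x y z I
  exact hb_localCohomology I _ 3 (hb_exists p I rfl)
end

section
/- Let R = ℂ[u,v,w,x,y,z] and let I be the ideal of 2×2 minors of the matrix with rows (u,v,w), (x,y,z). Then H^3_I(R) ≠ 0. In particular, I cannot be generated up to radical by 2 elements. -/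
/-!
STATEMENT 7: Let `R = ℂ[u,v,w,x,y,z]` and `I` the ideal of `2×2` minors of the
matrix with rows `(u,v,w)`, `(x,y,z)`.  Then `H^3_I(R) ≠ 0`; in particular `I`
cannot be generated up to radical by `2` elements.
-/

section
open CategoryTheory Limits Opposite

namespace MinorsLC
noncomputable section

variable {R : Type} [CommRing R]

abbrev G (M : ModuleCat.{0} R) : ModuleCat.{0} R ⥤ (ModuleCat.{0} R)ᵒᵖ :=
  ((linearYoneda R (ModuleCat.{0} R)).obj M).rightOp

abbrev KG (M : ModuleCat.{0} R) (K : ChainComplex (ModuleCat.{0} R) ℕ) :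
    ChainComplex (ModuleCat.{0} R)ᵒᵖ ℕ :=
  ((G M).mapHomologicalComplex _).obj K

def zhat {M X : ModuleCat.{0} R} (z : X ⟶ M) : (G M).obj X ⟶ op (ModuleCat.of R R) :=
  Quiver.Hom.op (ModuleCat.ofHom (LinearMap.toSpanSingleton R (X ⟶ M) z))

lemma zhat_unop_one {M X : ModuleCat.{0} R} (z : X ⟶ M) :
    (zhat z).unop (1 : R) = z := by
  change (1 : R) • z = z
  simp

lemma zhat_map {M X Y : ModuleCat.{0} R} (f : Y ⟶ X) (z : X ⟶ M) :
    (G M).map f ≫ zhat z = zhat (f ≫ z) := by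
  apply Quiver.Hom.unop_inj
  ext
  rfl

lemma zhat_zero {M X : ModuleCat.{0} R} : zhat (0 : X ⟶ M) = 0 := by
  apply Quiver.Hom.unop_inj
  ext
  change (1 : R) • (0 : X ⟶ M) = 0
  simp

def zh {M : ModuleCat.{0} R} {K : ChainComplex (ModuleCat.{0} R) ℕ} {n : ℕ} (z : K.X n ⟶ M) :
    (KG M K).X n ⟶ op (ModuleCat.of R R) := zhat z

lemma zh_unop_one {M : ModuleCat.{0} R} {K : ChainComplex (ModuleCat.{0} R) ℕ} {n : ℕ}
    (z : K.X n ⟶ M) : (zh z).unop (1 : R) = z := zhat_unop_one z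

lemma zh_d {M : ModuleCat.{0} R} {K : ChainComplex (ModuleCat.{0} R) ℕ} {m n : ℕ}
    (z : K.X n ⟶ M) : (KG M K).d m n ≫ zh z = zh (K.d m n ≫ z) :=
  zhat_map _ _

lemma zh_zero {M : ModuleCat.{0} R} {K : ChainComplex (ModuleCat.{0} R) ℕ} {n : ℕ} :
    zh (0 : K.X n ⟶ M) = 0 := zhat_zero

lemma zh_map {M : ModuleCat.{0} R} {K L : ChainComplex (ModuleCat.{0} R) ℕ} {n : ℕ}
    (φ : L ⟶ K) (z : K.X n ⟶ M) :
    (((G M).mapHomologicalComplex _).map φ).f n ≫ zh z = zh (φ.f n ≫ z) :=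
  zhat_map _ _

lemma KG_z {M : ModuleCat.{0} R} {K : ChainComplex (ModuleCat.{0} R) ℕ}
    (z : K.X 3 ⟶ M) (hz : K.d 4 3 ≫ z = 0) : (KG M K).d 4 3 ≫ zh z = 0 := by
  rw [zh_d, hz, zh_zero]

def hcls {M : ModuleCat.{0} R} (K : ChainComplex (ModuleCat.{0} R) ℕ) (z : K.X 3 ⟶ M)
    (hz : K.d 4 3 ≫ z = 0) : (KG M K).homology 3 ⟶ op (ModuleCat.of R R) :=
  (KG M K).homologyι 3 ≫ (KG M K).descOpcycles (zh z) 4 (by simp) (KG_z z hz)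

lemma hcls_map {M : ModuleCat.{0} R} {K L : ChainComplex (ModuleCat.{0} R) ℕ} (φ : L ⟶ K)
    (z : K.X 3 ⟶ M) (hz : K.d 4 3 ≫ z = 0) :
    HomologicalComplex.homologyMap (((G M).mapHomologicalComplex _).map φ) 3 ≫ hcls K z hz =
      hcls L (φ.f 3 ≫ z) (by rw [← φ.comm_assoc, hz, comp_zero]) := by
  unfold hcls
  rw [HomologicalComplex.homologyι_naturality_assoc,
    HomologicalComplex.opcyclesMap_comp_descOpcycles]
  congr 2

lemma hcls_zero {M : ModuleCat.{0} R} (K : ChainComplex (ModuleCat.{0} R) ℕ) (z : K.X 3 ⟶ M)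
    (hz : K.d 4 3 ≫ z = 0) (h1 : hcls K z hz = 0) :
    ∃ y : K.X 2 ⟶ M, z = K.d 3 2 ≫ y := by
  unfold hcls at h1
  have ex : (ShortComplex.mk _ _ ((KG M K).homologyι_comp_fromOpcycles 3 2)).Exact :=
    ShortComplex.exact_of_f_is_kernel _ ((KG M K).homologyIsKernel 3 2 (by simp))
  obtain ⟨h', h2⟩ : ∃ h' : (KG M K).X 2 ⟶ op (ModuleCat.of R R),
      (KG M K).fromOpcycles 3 2 ≫ h' =
        (KG M K).descOpcycles (zh z) 4 (by simp) (KG_z z hz) :=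
    ⟨ex.descToInjective _ h1, ex.comp_descToInjective _ h1⟩
  have h3 : zh z = (KG M K).d 3 2 ≫ h' := by
    rw [← (KG M K).p_fromOpcycles, Category.assoc, h2, HomologicalComplex.p_descOpcycles]
  refine ⟨h'.unop (1 : R), ?_⟩
  rw [← zh_unop_one z, h3]
  rfl

lemma hcls_bdry {M : ModuleCat.{0} R} (K : ChainComplex (ModuleCat.{0} R) ℕ) (z : K.X 3 ⟶ M)
    (hz : K.d 4 3 ≫ z = 0) (y : K.X 2 ⟶ M) (hy : z = K.d 3 2 ≫ y) : hcls K z hz = 0 := by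
  unfold hcls
  exact HomologicalComplex.homologyι_descOpcycles_eq_zero_of_boundary _ _ _ _ (i' := 2)
    (x := zh y) (by rw [hy, zh_d])

def clsHom {M N : ModuleCat.{0} R} (P : ProjectiveResolution N) (z : P.complex.X 3 ⟶ M)
    (hz : P.complex.d 4 3 ≫ z = 0) : ((G M).leftDerived 3).obj N ⟶ op (ModuleCat.of R R) :=
  (P.isoLeftDerivedObj (G M) 3).hom ≫ hcls P.complex z hz

lemma clsHom_map {M N N' : ModuleCat.{0} R} (f : N' ⟶ N) (P : ProjectiveResolution N)
    (P' : ProjectiveResolution N')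
    (z : P.complex.X 3 ⟶ M) (hz : P.complex.d 4 3 ≫ z = 0)
    (φ : P'.complex ⟶ P.complex) (comm : φ.f 0 ≫ P.π.f 0 = P'.π.f 0 ≫ f) :
    ((G M).leftDerived 3).map f ≫ clsHom P z hz =
     clsHom P' (φ.f 3 ≫ z) (by rw [← φ.comm_assoc, hz, comp_zero]) := by
  unfold clsHom
  rw [← hcls_map]
  exact (ProjectiveResolution.isoLeftDerivedObj_hom_naturality_assoc f P' P φ comm (G M) 3 _)

def cls {M N : ModuleCat.{0} R} (P : ProjectiveResolution N) (z : P.complex.X 3 ⟶ M)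
    (hz : P.complex.d 4 3 ≫ z = 0) : ((Ext R (ModuleCat.{0} R) 3).obj (op N)).obj M :=
  (clsHom P z hz).unop (1 : R)

lemma cls_map {M N N' : ModuleCat.{0} R} (f : N' ⟶ N) (P : ProjectiveResolution N)
    (P' : ProjectiveResolution N')
    (z : P.complex.X 3 ⟶ M) (hz : P.complex.d 4 3 ≫ z = 0)
    (φ : P'.complex ⟶ P.complex) (comm : φ.f 0 ≫ P.π.f 0 = P'.π.f 0 ≫ f) :
    (((Ext R (ModuleCat.{0} R) 3).map f.op).app M) (cls P z hz) =
      cls P' (φ.f 3 ≫ z) (by rw [← φ.comm_assoc, hz, comp_zero]) := by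
  have key := clsHom_map f P P' z hz φ comm
  exact congrArg (fun t => t.unop (1 : R)) key

lemma cls_zero {M N : ModuleCat.{0} R} (P : ProjectiveResolution N) (z : P.complex.X 3 ⟶ M)
    (hz : P.complex.d 4 3 ≫ z = 0) (h : cls P z hz = 0) :
    ∃ y : P.complex.X 2 ⟶ M, z = P.complex.d 3 2 ≫ y := by
  have h1 : clsHom P z hz = 0 := by
    apply Quiver.Hom.unop_inj
    ext
    exact h
  unfold clsHom at h1
  exact hcls_zero _ z hz
    ((Iso.cancel_iso_hom_left (P.isoLeftDerivedObj (G M) 3) _ _).1 (h1.trans comp_zero.symm))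

lemma cls_bdry {M N : ModuleCat.{0} R} (P : ProjectiveResolution N) (z : P.complex.X 3 ⟶ M)
    (hz : P.complex.d 4 3 ≫ z = 0)
    (y : P.complex.X 2 ⟶ M) (hy : z = P.complex.d 3 2 ≫ y) : cls P z hz = 0 := by
  have h1 : clsHom P z hz = 0 := by
    unfold clsHom
    rw [hcls_bdry _ z hz y hy]
    exact comp_zero
  rw [cls, h1]
  rfl

lemma exists_lift {N N' : ModuleCat.{0} R} (f : N' ⟶ N) (P : ProjectiveResolution N)
    (P' : ProjectiveResolution N') : ∃ φ : P'.complex ⟶ P.complex,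
    φ.f 0 ≫ P.π.f 0 = P'.π.f 0 ≫ f :=
  ⟨ProjectiveResolution.lift f P' P, ProjectiveResolution.lift_commutes_zero f P' P⟩

lemma res_exact {N : ModuleCat.{0} R} (P : ProjectiveResolution N) (n : ℕ) :
    Function.Exact (P.complex.d (n+2) (n+1)).hom (P.complex.d (n+1) n).hom :=
  (ShortComplex.ShortExact.moduleCat_exact_iff_function_exact _).1 (P.exact_succ n)

/-- The augmentation. -/
def aug {N : ModuleCat.{0} R} (P : ProjectiveResolution N) : P.complex.X 0 ⟶ N := P.π.f 0

lemma aug_exact {N : ModuleCat.{0} R} (P : ProjectiveResolution N) :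
    Function.Exact (P.complex.d 1 0).hom (aug P).hom :=
  (ShortComplex.ShortExact.moduleCat_exact_iff_function_exact _).1 P.exact₀

lemma aug_surj {N : ModuleCat.{0} R} (P : ProjectiveResolution N) :
    Function.Surjective (aug P).hom := by
  have h : Epi (P.π.f 0) := inferInstance
  have h' : Epi (aug P) := h
  exact (ModuleCat.epi_iff_surjective _).1 h'

lemma res_proj {N : ModuleCat.{0} R} (P : ProjectiveResolution N) (n : ℕ) :
    Module.Projective R (P.complex.X n) :=
  (IsProjective.iff_projective _).2 (P.projective n)

lemma lc_zero (I : Ideal R) (M : ModuleCat.{0} R) 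
    (h : Subsingleton ((localCohomology I 3).obj M)) (t : ℕ)
    (e : ((Ext R (ModuleCat.{0} R) 3).obj (op (ModuleCat.of R (R ⧸ I ^ t)))).obj M) :
    ∃ (s : ℕ) (hs : I ^ s ≤ I ^ t), t ≤ s ∧
     ((Ext R (ModuleCat.{0} R) 3).map 
      (ModuleCat.ofHom (Submodule.mapQ _ _ LinearMap.id hs)).op).app M e = 0 := by
  let D := localCohomology.diagram (localCohomology.idealPowersDiagram I) 3
  let F := D ⋙ (evaluation _ _).obj M
  have hF : Subsingleton (colimit F : ModuleCat R) := by
    have i : (localCohomology I 3).obj M ≅ colimit F := 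
      colimitObjIsoColimitCompEvaluation D M
    exact i.toLinearEquiv.symm.toEquiv.subsingleton
  obtain ⟨j', i, h⟩ := Concrete.colimit_rep_eq_zero R F (op (op t)) e 
    (Subsingleton.elim _ _)
  exact ⟨j'.unop.unop, Ideal.pow_le_pow_right i.unop.unop.down.down, i.unop.unop.down.down, h⟩

end
end MinorsLC

end

section
namespace MinorsLC
section chase
variable {R : Type} [CommRing R]

lemma lift1 {P A B C : Type} [AddCommGroup P] [Module R P] [AddCommGroup A] [Module R A]
    [AddCommGroup B] [Module R B] [AddCommGroup C] [Module R C] [Module.Projective R P]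
    (f : A →ₗ[R] B) (g : B →ₗ[R] C) (hex : Function.Exact f g) (h : P →ₗ[R] B)
    (hh : g ∘ₗ h = 0) : ∃ k : P →ₗ[R] A, f ∘ₗ k = h := by
  obtain ⟨k, hk⟩ := Module.projective_lifting_property f.rangeRestrict
    (h.codRestrict (LinearMap.range f) (fun x => (hex _).1 (LinearMap.congr_fun hh x)))
    f.surjective_rangeRestrict
  refine ⟨k, ?_⟩
  ext x
  have := LinearMap.congr_fun hk x
  exact congrArg Subtype.val this

variable {N N' P0 P1 P2 P3 F0 F1 F2 F3 : Type}
  [AddCommGroup N] [Module R N] [AddCommGroup N'] [Module R N']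
  [AddCommGroup P0] [Module R P0] [AddCommGroup P1] [Module R P1]
  [AddCommGroup P2] [Module R P2] [AddCommGroup P3] [Module R P3]
  [AddCommGroup F0] [Module R F0] [AddCommGroup F1] [Module R F1]
  [AddCommGroup F2] [Module R F2] [AddCommGroup F3] [Module R F3]

lemma lift3 [Module.Projective R P0] [Module.Projective R P1] [Module.Projective R P2]
    [Module.Projective R P3]
    (p0 : P0 →ₗ[R] N) (p1 : P1 →ₗ[R] P0) (p2 : P2 →ₗ[R] P1) (p3 : P3 →ₗ[R] P2)
    (h01 : p0 ∘ₗ p1 = 0) (h12 : p1 ∘ₗ p2 = 0) (h23 : p2 ∘ₗ p3 = 0)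
    (f0 : F0 →ₗ[R] N') (f1 : F1 →ₗ[R] F0) (f2 : F2 →ₗ[R] F1) (f3 : F3 →ₗ[R] F2)
    (e0 : Function.Surjective f0) (e1 : Function.Exact f1 f0) (e2 : Function.Exact f2 f1)
    (e3 : Function.Exact f3 f2) (φ : N →ₗ[R] N') :
    ∃ (a0 : P0 →ₗ[R] F0) (a1 : P1 →ₗ[R] F1) (a2 : P2 →ₗ[R] F2) (a3 : P3 →ₗ[R] F3),
      f0 ∘ₗ a0 = φ ∘ₗ p0 ∧ f1 ∘ₗ a1 = a0 ∘ₗ p1 ∧ f2 ∘ₗ a2 = a1 ∘ₗ p2 ∧ f3 ∘ₗ a3 = a2 ∘ₗ p3 := by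
  obtain ⟨a0, h0⟩ := Module.projective_lifting_property f0 (φ ∘ₗ p0) e0
  obtain ⟨a1, h1⟩ := lift1 f1 f0 e1 (a0 ∘ₗ p1) (by
    rw [← LinearMap.comp_assoc, h0, LinearMap.comp_assoc, h01, LinearMap.comp_zero])
  obtain ⟨a2, h2⟩ := lift1 f2 f1 e2 (a1 ∘ₗ p2) (by
    rw [← LinearMap.comp_assoc, h1, LinearMap.comp_assoc, h12, LinearMap.comp_zero])
  obtain ⟨a3, h3⟩ := lift1 f3 f2 e3 (a2 ∘ₗ p3) (by
    rw [← LinearMap.comp_assoc, h2, LinearMap.comp_assoc, h23, LinearMap.comp_zero])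
  exact ⟨a0, a1, a2, a3, h0, h1, h2, h3⟩

lemma homot [Module.Projective R P0] [Module.Projective R P1] [Module.Projective R P2]
    (p1 : P1 →ₗ[R] P0) (p2 : P2 →ₗ[R] P1) (p3 : P3 →ₗ[R] P2)
    (h12 : p1 ∘ₗ p2 = 0) (h23 : p2 ∘ₗ p3 = 0)
    (f0 : F0 →ₗ[R] N') (f1 : F1 →ₗ[R] F0) (f2 : F2 →ₗ[R] F1) (f3 : F3 →ₗ[R] F2)
    (e1 : Function.Exact f1 f0) (e2 : Function.Exact f2 f1)
    (e3 : Function.Exact f3 f2)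
    (a0 : P0 →ₗ[R] F0) (a1 : P1 →ₗ[R] F1) (a2 : P2 →ₗ[R] F2) (a3 : P3 →ₗ[R] F3)
    (c0 : f0 ∘ₗ a0 = 0) (c1 : f1 ∘ₗ a1 = a0 ∘ₗ p1) (c2 : f2 ∘ₗ a2 = a1 ∘ₗ p2)
    (c3 : f3 ∘ₗ a3 = a2 ∘ₗ p3) :
    ∃ h : P2 →ₗ[R] F3, f3 ∘ₗ (a3 - h ∘ₗ p3) = 0 := by
  obtain ⟨k0, h0⟩ := lift1 f1 f0 e1 a0 c0
  obtain ⟨k1, h1⟩ := lift1 f2 f1 e2 (a1 - k0 ∘ₗ p1) (by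
    rw [LinearMap.comp_sub, c1, ← LinearMap.comp_assoc, h0, sub_self])
  obtain ⟨k2, h2⟩ := lift1 f3 f2 e3 (a2 - k1 ∘ₗ p2) (by
    rw [LinearMap.comp_sub, c2, ← LinearMap.comp_assoc, h1, LinearMap.sub_comp,
      LinearMap.comp_assoc, h12, LinearMap.comp_zero, sub_zero, sub_self])
  refine ⟨k2, ?_⟩
  rw [LinearMap.comp_sub, c3, ← LinearMap.comp_assoc, h2, LinearMap.sub_comp,
      LinearMap.comp_assoc, h23, LinearMap.comp_zero, sub_zero, sub_self]

lemma exact_comp {A B C : Type} [AddCommGroup A] [Module R A]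
    [AddCommGroup B] [Module R B] [AddCommGroup C] [Module R C]
    {f : A →ₗ[R] B} {g : B →ₗ[R] C} (hex : Function.Exact f g) : g ∘ₗ f = 0 :=
  hex.linearMap_comp_eq_zero

/-- A module with a projective resolution of length two has no `Ext^3`. -/
lemma chaseB {P4 M : Type} [AddCommGroup P4] [Module R P4] [AddCommGroup M] [Module R M]
    [Module.Projective R P0] [Module.Projective R P1] [Module.Projective R P2]
    [Module.Projective R P3] [Module.Projective R F0] [Module.Projective R F1]
    [Module.Projective R F2]
    (p0 : P0 →ₗ[R] N) (p1 : P1 →ₗ[R] P0) (p2 : P2 →ₗ[R] P1) (p3 : P3 →ₗ[R] P2)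
    (p4 : P4 →ₗ[R] P3) (q0 : Function.Surjective p0) (q1 : Function.Exact p1 p0)
    (q2 : Function.Exact p2 p1) (q3 : Function.Exact p3 p2) (q4 : Function.Exact p4 p3)
    (f0 : F0 →ₗ[R] N) (f1 : F1 →ₗ[R] F0) (f2 : F2 →ₗ[R] F1)
    (e0 : Function.Surjective f0) (e1 : Function.Exact f1 f0) (e2 : Function.Exact f2 f1)
    (e3 : Function.Injective f2) (z : P3 →ₗ[R] M) (hz : z ∘ₗ p4 = 0) :
    ∃ y : P2 →ₗ[R] M, z = y ∘ₗ p3 := by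
  have e3' : Function.Exact (0 : PUnit →ₗ[R] F2) f2 := by
    intro x
    constructor
    · intro h
      exact ⟨0, by rw [LinearMap.zero_apply]; exact (e3 (by rw [h, map_zero])).symm⟩
    · rintro ⟨y, rfl⟩
      simp
  obtain ⟨a0, a1, a2, a3, ha0, ha1, ha2, ha3⟩ := lift3 p0 p1 p2 p3 (exact_comp q1) (exact_comp q2)
    (exact_comp q3) f0 f1 f2 (0 : PUnit →ₗ[R] F2) e0 e1 e2 e3' LinearMap.id
  obtain ⟨b0, b1, b2, b3, hb0, hb1, hb2, hb3⟩ := lift3 f0 f1 f2 (0 : PUnit →ₗ[R] F2)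
    (exact_comp e1) (exact_comp e2)
    (exact_comp e3') p0 p1 p2 p3 q0 q1 q2 q3 LinearMap.id
  rw [LinearMap.ext_iff] at ha0 ha1 ha2 ha3 hb0 hb1 hb2 hb3
  simp only [LinearMap.comp_apply, LinearMap.id_apply, LinearMap.zero_apply] at ha0 ha1 ha2 ha3 hb0 hb1 hb2 hb3
  obtain ⟨h, hh⟩ := homot p1 p2 p3 (exact_comp q2) (exact_comp q3) p0 p1 p2 p3 q1 q2 q3
    (LinearMap.id - b0 ∘ₗ a0) (LinearMap.id - b1 ∘ₗ a1) (LinearMap.id - b2 ∘ₗ a2)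
    LinearMap.id
    (by ext t; simp [hb0, ha0]) (by ext t; simp [hb1, ha1]) (by ext t; simp [hb2, ha2])
    (by ext t; simp [← ha3])
  refine ⟨z ∘ₗ h, ?_⟩
  ext t
  have h1 := LinearMap.congr_fun hh t
  obtain ⟨k, hk⟩ := (q4 _).1 h1
  have h2 := LinearMap.congr_fun hz k
  rw [LinearMap.comp_apply, hk] at h2
  simpa [sub_eq_zero] using h2

/-- The nonvanishing chase. -/
lemma chaseA {Q0 Q1 Q2 Q3 G0 G1 G2 G3 : Type}
    [AddCommGroup Q0] [Module R Q0] [AddCommGroup Q1] [Module R Q1]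
    [AddCommGroup Q2] [Module R Q2] [AddCommGroup Q3] [Module R Q3]
    [AddCommGroup G0] [Module R G0] [AddCommGroup G1] [Module R G1]
    [AddCommGroup G2] [Module R G2] [AddCommGroup G3] [Module R G3]
    [Module.Projective R G0] [Module.Projective R G1] [Module.Projective R G2]
    [Module.Projective R G3]
    -- the map of modules
    (φ : N' →ₗ[R] N)
    -- augmented complexes
    (p0 : P0 →ₗ[R] N) (p1 : P1 →ₗ[R] P0) (p2 : P2 →ₗ[R] P1) (p3 : P3 →ₗ[R] P2)
    (f0 : F0 →ₗ[R] N) (f1 : F1 →ₗ[R] F0) (f2 : F2 →ₗ[R] F1) (f3 : F3 →ₗ[R] F2)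
    (e1 : Function.Exact f1 f0) (e2 : Function.Exact f2 f1)
    (e3 : Function.Exact f3 f2) (e4 : Function.Injective f3)
    (a0 : P0 →ₗ[R] F0) (a1 : P1 →ₗ[R] F1) (a2 : P2 →ₗ[R] F2) (a3 : P3 →ₗ[R] F3)
    (ha0 : f0 ∘ₗ a0 = p0) (ha1 : f1 ∘ₗ a1 = a0 ∘ₗ p1) (ha2 : f2 ∘ₗ a2 = a1 ∘ₗ p2)
    (ha3 : f3 ∘ₗ a3 = a2 ∘ₗ p3)
    (q0 : Q0 →ₗ[R] N') (q1 : Q1 →ₗ[R] Q0) (q2 : Q2 →ₗ[R] Q1) (q3 : Q3 →ₗ[R] Q2)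
    (hq0 : Function.Surjective q0) (hq1 : Function.Exact q1 q0)
    (hq2 : Function.Exact q2 q1) (hq3 : Function.Exact q3 q2)
    (g0 : G0 →ₗ[R] N') (g1 : G1 →ₗ[R] G0) (g2 : G2 →ₗ[R] G1) (g3 : G3 →ₗ[R] G2)
    (g01 : g0 ∘ₗ g1 = 0) (g12 : g1 ∘ₗ g2 = 0) (g23 : g2 ∘ₗ g3 = 0)
    -- the lift of φ
    (l0 : Q0 →ₗ[R] P0) (l1 : Q1 →ₗ[R] P1) (l2 : Q2 →ₗ[R] P2) (l3 : Q3 →ₗ[R] P3)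
    (hl0 : p0 ∘ₗ l0 = φ ∘ₗ q0) (hl1 : p1 ∘ₗ l1 = l0 ∘ₗ q1) (hl2 : p2 ∘ₗ l2 = l1 ∘ₗ q2)
    (hl3 : p3 ∘ₗ l3 = l2 ∘ₗ q3)
    -- the comparison
    (t0 : G0 →ₗ[R] F0) (t1 : G1 →ₗ[R] F1) (t2 : G2 →ₗ[R] F2) (t3 : G3 →ₗ[R] F3)
    (ht0 : f0 ∘ₗ t0 = φ ∘ₗ g0) (ht1 : f1 ∘ₗ t1 = t0 ∘ₗ g1) (ht2 : f2 ∘ₗ t2 = t1 ∘ₗ g2)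
    (ht3 : f3 ∘ₗ t3 = t2 ∘ₗ g3)
    (y : Q2 →ₗ[R] F3) (hy : a3 ∘ₗ l3 = y ∘ₗ q3) : ∃ k : G2 →ₗ[R] F3, t3 = k ∘ₗ g3 := by
  obtain ⟨b0, b1, b2, b3, hb0, hb1, hb2, hb3⟩ := lift3 g0 g1 g2 g3 g01 g12 g23
    q0 q1 q2 q3 hq0 hq1 hq2 hq3 LinearMap.id
  have hy' := hy
  rw [LinearMap.ext_iff] at ha0 ha1 ha2 ha3 hb0 hb1 hb2 hb3 hl0 hl1 hl2 hl3 ht0 ht1 ht2 ht3 hy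
  simp only [LinearMap.comp_apply, LinearMap.id_apply] at ha0 ha1 ha2 ha3 hb0 hb1 hb2 hb3 hl0 hl1 hl2 hl3 ht0 ht1 ht2 ht3 hy
  obtain ⟨h, hh⟩ := homot g1 g2 g3 g12 g23 f0 f1 f2 f3 e1 e2 e3
    (t0 - a0 ∘ₗ l0 ∘ₗ b0) (t1 - a1 ∘ₗ l1 ∘ₗ b1) (t2 - a2 ∘ₗ l2 ∘ₗ b2) (t3 - a3 ∘ₗ l3 ∘ₗ b3)
    (by ext t; simp [ht0, ha0, hl0, hb0]) (by ext t; simp [ht1, ha1, hl1, hb1])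
    (by ext t; simp [ht2, ha2, hl2, hb2]) (by ext t; simp [ht3, ha3, hl3, hb3])
  refine ⟨h + y ∘ₗ b2, ?_⟩
  ext t
  have h1 := LinearMap.congr_fun hh t
  have h2 := e4 (h1.trans (map_zero f3).symm)
  simp only [LinearMap.sub_apply, LinearMap.comp_apply, hy, hb3, sub_eq_zero] at h2
  simp only [LinearMap.add_apply, LinearMap.comp_apply]
  rw [← h2]; abel
end chase
end MinorsLC

end

section
open MvPolynomial
namespace MinorsLC
noncomputable section

abbrev A : Type := MvPolynomial (Fin 6) ℂ

def m1 : A := X 1 * X 5 - X 2 * X 4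
def m2 : A := X 2 * X 3 - X 0 * X 5
def m3 : A := X 0 * X 4 - X 1 * X 3

/-- apolar pairing -/
def L (g : A) : A →ₗ[ℂ] ℂ :=
  (basisMonomials (Fin 6) ℂ).constr ℂ (fun α => ((∏ i, (α i).factorial : ℕ) : ℂ) * coeff α g)

lemma L_monomial (g : A) (α : Fin 6 →₀ ℕ) (c : ℂ) :
    L g (monomial α c) = c * (((∏ i, (α i).factorial : ℕ) : ℂ) * coeff α g) := by
  have : monomial α c = c • (basisMonomials (Fin 6) ℂ α) := by
    simp [smul_monomial]
  rw [this, map_smul, L, Module.Basis.constr_basis, smul_eq_mul]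

lemma L_X (g f : A) (i : Fin 6) : L g (X i * f) = L (pderiv i g) f := by
  induction f using MvPolynomial.induction_on' with
  | monomial α c =>
    rw [X, monomial_mul, one_mul, L_monomial, L_monomial, coeff_pderiv, add_comm (Finsupp.single i 1) α]
    have : (∏ j, ((α + Finsupp.single i 1 : Fin 6 →₀ ℕ) j).factorial : ℕ) = (α i + 1) * ∏ j, (α j).factorial := by
      rw [← Finset.mul_prod_erase _ _ (Finset.mem_univ i), ← Finset.mul_prod_erase Finset.univ (fun j => (α j).factorial) (Finset.mem_univ i), ← mul_assoc]
      congr 1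
      · simp [Nat.factorial_succ]
      · apply Finset.prod_congr rfl
        intro j hj
        have : i ≠ j := (Finset.ne_of_mem_erase hj).symm
        simp [Finsupp.single_apply, this]
    rw [this]
    push_cast
    ring
  | add p q hp hq => rw [mul_add, map_add, hp, hq, map_add]

lemma L_sub (g h f : A) : L (g - h) f = L g f - L h f := by
  induction f using MvPolynomial.induction_on' with
  | monomial α c => simp only [L_monomial, coeff_sub]; ring
  | add p q hp hq => rw [map_add, hp, hq, map_add, map_add]; ring

def E1 (g : A) : A := pderiv 5 (pderiv 1 g) - pderiv 4 (pderiv 2 g)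
def E2 (g : A) : A := pderiv 3 (pderiv 2 g) - pderiv 5 (pderiv 0 g)
def E3 (g : A) : A := pderiv 4 (pderiv 0 g) - pderiv 3 (pderiv 1 g)

lemma L_m1 (g f : A) : L g (m1 * f) = L (E1 g) f := by
  rw [m1, sub_mul, map_sub, mul_assoc, mul_assoc, L_X, L_X, L_X, L_X, E1, L_sub]
lemma L_m2 (g f : A) : L g (m2 * f) = L (E2 g) f := by
  rw [m2, sub_mul, map_sub, mul_assoc, mul_assoc, L_X, L_X, L_X, L_X, E2, L_sub]
lemma L_m3 (g f : A) : L g (m3 * f) = L (E3 g) f := by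
  rw [m3, sub_mul, map_sub, mul_assoc, mul_assoc, L_X, L_X, L_X, L_X, E3, L_sub]

lemma L_pow (m : A) (E : A → A) (h : ∀ g f, L g (m * f) = L (E g) f) (n : ℕ) (g f : A) :
    L g (m ^ n * f) = L (E^[n] g) f := by
  induction n generalizing g with
  | zero => simp
  | succ n ih => rw [pow_succ', mul_assoc, h, ih, Function.iterate_succ_apply]

abbrev B : Type := MvPolynomial (Fin 3) ℂ

def ev : B →ₐ[ℂ] A := aeval ![m1, m2, m3]

lemma chain (i : Fin 6) (p : B) : pderiv i (ev p) =
    ev (pderiv 0 p) * pderiv i m1 + ev (pderiv 1 p) * pderiv i m2 + ev (pderiv 2 p) * pderiv i m3 := by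
  induction p using MvPolynomial.induction_on with
  | C a => simp [ev]
  | add p q hp hq => simp only [map_add, hp, hq]; ring
  | mul_X p n hp =>
    simp only [map_mul, Derivation.leibniz, hp, smul_eq_mul, map_add]
    fin_cases n <;> simp [ev, pderiv_X, Pi.single_apply] <;> ring

lemma pcomm (i j : Fin 3) (p : B) : pderiv i (pderiv j p) = pderiv j (pderiv i p) := by
  ext m
  simp only [coeff_pderiv, add_right_comm m]
  by_cases h : i = j
  · subst h; rfl
  · simp [Finsupp.single_apply, h, Ne.symm h]; ring

def T (i : Fin 3) (p : B) : B := 2 * pderiv i p + (X 0 * pderiv 0 (pderiv i p) +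
  X 1 * pderiv 1 (pderiv i p) + X 2 * pderiv 2 (pderiv i p))

lemma E1_ev (p : B) : E1 (ev p) = ev (T 0 p) := by
  have hX0 : ev (X 0) = m1 := by simp [ev]
  have hX1 : ev (X 1) = m2 := by simp [ev]
  have hX2 : ev (X 2) = m3 := by simp [ev]
  have h2 : ev 2 = 2 := map_ofNat ev 2
  simp only [E1, T, chain, map_add, map_mul, hX0, hX1, hX2, h2, Derivation.leibniz, smul_eq_mul,
    pcomm 1 0, pcomm 2 0, pcomm 2 1]
  simp [m1, m2, m3, pderiv_X, Pi.single_apply]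
  ring

lemma E2_ev (p : B) : E2 (ev p) = ev (T 1 p) := by
  have hX0 : ev (X 0) = m1 := by simp [ev]
  have hX1 : ev (X 1) = m2 := by simp [ev]
  have hX2 : ev (X 2) = m3 := by simp [ev]
  have h2 : ev 2 = 2 := map_ofNat ev 2
  simp only [E2, T, chain, map_add, map_mul, hX0, hX1, hX2, h2, Derivation.leibniz, smul_eq_mul,
    pcomm 1 0, pcomm 2 0, pcomm 2 1]
  simp [m1, m2, m3, pderiv_X, Pi.single_apply]
  ring

lemma E3_ev (p : B) : E3 (ev p) = ev (T 2 p) := by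
  have hX0 : ev (X 0) = m1 := by simp [ev]
  have hX1 : ev (X 1) = m2 := by simp [ev]
  have hX2 : ev (X 2) = m3 := by simp [ev]
  have h2 : ev 2 = 2 := map_ofNat ev 2
  simp only [E3, T, chain, map_add, map_mul, hX0, hX1, hX2, h2, Derivation.leibniz, smul_eq_mul,
    pcomm 1 0, pcomm 2 0, pcomm 2 1]
  simp [m1, m2, m3, pderiv_X, Pi.single_apply]
  ring

lemma T_monomial (i : Fin 3) (s : Fin 3 →₀ ℕ) (a : ℂ) :
    ∃ c : ℂ, c ≠ 0 ∧ T i (monomial s a) = monomial (s - Finsupp.single i 1) (a * s i * c) := by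
  set t := s - Finsupp.single i 1 with ht
  refine ⟨2 + t 0 + t 1 + t 2, ?_, ?_⟩
  · have : (2 + t 0 + t 1 + t 2 : ℂ) = ((2 + t 0 + t 1 + t 2 : ℕ) : ℂ) := by push_cast; ring
    rw [this, Nat.cast_ne_zero]; omega
  · rw [T, pderiv_monomial, X_mul_pderiv_monomial, X_mul_pderiv_monomial, X_mul_pderiv_monomial,
      ← ht]
    rw [← map_nsmul, ← map_nsmul, ← map_nsmul, two_mul, ← two_nsmul, ← map_nsmul, ← map_add, ← map_add, ← map_add]
    congr 1
    simp only [nsmul_eq_mul]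
    push_cast
    ring

lemma iter (E : A → A) (i : Fin 3) (hE : ∀ p, E (ev p) = ev (T i p)) (n : ℕ) (s : Fin 3 →₀ ℕ)
    (a : ℂ) : (s i < n → E^[n] (ev (monomial s a)) = 0) ∧ (n ≤ s i → a ≠ 0 → 
      ∃ c : ℂ, c ≠ 0 ∧ E^[n] (ev (monomial s a)) = ev (monomial (s - Finsupp.single i n) c)) := by
  induction n generalizing s a with
  | zero => exact ⟨by simp, fun _ h => ⟨a, h, by simp⟩⟩
  | succ n ih =>
    obtain ⟨c, hc, h⟩ := T_monomial i s a
    rw [Function.iterate_succ_apply, hE, h]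
    obtain ⟨ih1, ih2⟩ := ih (s - Finsupp.single i 1) (a * s i * c)
    constructor
    · intro hs
      rcases Nat.eq_zero_or_pos (s i) with h0 | h0
      · have h00 : ∀ n : ℕ, E^[n] 0 = 0 := by
          intro n
          have : E 0 = 0 := by simpa [T] using hE 0
          exact Function.iterate_fixed this n
        rw [h0]; simp [h00]
      · apply ih1; simp; omega
    · intro hs ha
      obtain ⟨d, hd, hd'⟩ := ih2 (by simp; omega) (by
        have : (s i : ℂ) ≠ 0 := by rw [Nat.cast_ne_zero]; omega
        positivity)
      refine ⟨d, hd, ?_⟩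
      rw [hd', tsub_tsub, ← Finsupp.single_add, add_comm 1 n]

lemma key (k : ℕ) (a b c : A) :
    (m1 * m2 * m3) ^ k ≠ m1 ^ (k + 1) * a + m2 ^ (k + 1) * b + m3 ^ (k + 1) * c := by
  intro h
  let s : Fin 3 →₀ ℕ := Finsupp.single 0 k + Finsupp.single 1 k + Finsupp.single 2 k
  have s0 : s 0 = k := by simp [s]
  have s1 : s 1 = k := by simp [s]
  have s2 : s 2 = k := by simp [s]
  let g := ev (monomial s 1)
  have h1 := congrArg (L g) h
  rw [map_add, map_add, L_pow _ _ L_m1, L_pow _ _ L_m2, L_pow _ _ L_m3,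
    (iter E1 0 E1_ev (k+1) s 1).1 (by omega), (iter E2 1 E2_ev (k+1) s 1).1 (by omega),
    (iter E3 2 E3_ev (k+1) s 1).1 (by omega)] at h1
  have L0 : ∀ f, L 0 f = 0 := by
    intro f
    have := L_sub 0 0 f
    simpa using this
  rw [L0, L0, L0, mul_pow, mul_pow, mul_assoc, L_pow _ _ L_m1] at h1
  obtain ⟨c1, hc1, e1⟩ := (iter E1 0 E1_ev k s 1).2 (by omega) one_ne_zero
  rw [e1, L_pow _ _ L_m2] at h1
  obtain ⟨c2, hc2, e2⟩ := (iter E2 1 E2_ev k (s - Finsupp.single 0 k) c1).2 (by simp; omega) hc1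
  rw [e2, ← mul_one (m3 ^ k), L_pow _ _ L_m3] at h1
  obtain ⟨c3, hc3, e3⟩ := (iter E3 2 E3_ev k (s - Finsupp.single 0 k - Finsupp.single 1 k) c2).2 (by simp; omega) hc2
  have hs : s - Finsupp.single 0 k - Finsupp.single 1 k - Finsupp.single 2 k = 0 := by
    rw [tsub_tsub, tsub_tsub, ← add_assoc, tsub_self]
  rw [e3, hs] at h1
  have : ev (monomial 0 c3) = C c3 := by simp [ev]
  rw [this, show (1 : A) = monomial 0 1 from rfl, L_monomial] at h1
  simp [hc3] at h1
end
end MinorsLC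

end

section
namespace MinorsLC
noncomputable section
variable {S : Type} [CommRing S]

structure Hyp (u v w x y z : S) : Prop where
  hwz : ∀ q a b, q * (u * y - v * x) = a * w + b * z → ∃ a b, q = a * w + b * z
  r1 : ∀ a b, a * u + b * x = 0 → ∃ c, a = c * x ∧ b = - c * u
  r2 : ∀ a b, a * v + b * y = 0 → ∃ c, a = c * y ∧ b = - c * v
  r3 : ∀ a b, a * w + b * z = 0 → ∃ c, a = c * z ∧ b = - c * w
  h12 : ∀ a b, a * (v * z - w * y) + b * (w * x - u * z) = 0 →
    ∃ c, a = - c * (w * x - u * z) ∧ b = c * (v * z - w * y)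
  n1 : ∀ a, a * (v * z - w * y) = 0 → a = 0
  n2 : ∀ a, a * (w * x - u * z) = 0 → a = 0
  n3 : ∀ a, a * (u * y - v * x) = 0 → a = 0
  nx : ∀ a, a * x = 0 → a = 0

variable {u v w x y z : S}

lemma Hyp.HB (H : Hyp u v w x y z) (p q r : S)
    (h : p * (v * z - w * y) + q * (w * x - u * z) + r * (u * y - v * x) = 0) :
    ∃ a b, p = a * u + b * x ∧ q = a * v + b * y ∧ r = a * w + b * z := by
  obtain ⟨a, b, hr⟩ := H.hwz r (p * y - q * x) (q * u - p * v) (by linear_combination h)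
  obtain ⟨c, h1, h2⟩ := H.h12 (p - a * u - b * x) (q - a * v - b * y) (by
    rw [hr] at h; linear_combination h)
  exact ⟨a + c * z, b - c * w, by linear_combination h1, by linear_combination h2,
    by linear_combination hr⟩

variable (u v w x y z) in
def f1 : (Fin 6 → S) →ₗ[S] S where
  toFun q := q 0 * (v * z - w * y) ^ 2 + q 1 * ((v * z - w * y) * (w * x - u * z)) +
    q 2 * ((v * z - w * y) * (u * y - v * x)) + q 3 * (w * x - u * z) ^ 2 +
    q 4 * ((w * x - u * z) * (u * y - v * x)) + q 5 * (u * y - v * x) ^ 2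
  map_add' p q := by simp only [Pi.add_apply]; ring
  map_smul' c q := by simp only [Pi.smul_apply, smul_eq_mul, RingHom.id_apply]; ring

variable (u v w x y z) in
def f2 : (Fin 6 → S) →ₗ[S] (Fin 6 → S) where
  toFun q := ![u * q 0 + x * q 3, u * q 1 + v * q 0 + x * q 4 + y * q 3,
    u * q 2 + w * q 0 + x * q 5 + z * q 3, v * q 1 + y * q 4,
    v * q 2 + w * q 1 + y * q 5 + z * q 4, w * q 2 + z * q 5]
  map_add' p q := by ext i; fin_cases i <;> simp <;> ring
  map_smul' c q := by ext i; fin_cases i <;> simp <;> ring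

variable (u v w x y z) in
def f3 : S →ₗ[S] (Fin 6 → S) where
  toFun c := ![c * x, c * y, c * z, - c * u, - c * v, - c * w]
  map_add' p q := by ext i; fin_cases i <;> simp <;> ring
  map_smul' c q := by ext i; fin_cases i <;> simp <;> ring

lemma Hyp.ex3 (H : Hyp u v w x y z) : Function.Exact (f3 u v w x y z) (f2 u v w x y z) := by
  intro q
  constructor
  · intro h
    have h0 := congrFun h 0
    have h1 := congrFun h 1
    have h2 := congrFun h 2
    have h3 := congrFun h 3
    have h5 := congrFun h 5
    simp [f2] at h0 h1 h2 h3 h5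
    obtain ⟨c, e0, e3⟩ := H.r1 (q 0) (q 3) (by linear_combination h0)
    obtain ⟨d, e1, e4⟩ := H.r2 (q 1) (q 4) (by linear_combination h3)
    obtain ⟨e, e2, e5⟩ := H.r3 (q 2) (q 5) (by linear_combination h5)
    rw [e0, e3, e1, e4] at h1
    rw [e0, e3, e2, e5] at h2
    have hd : d - c = 0 := H.n3 _ (by linear_combination h1)
    have he : c - e = 0 := H.n2 _ (by linear_combination h2)
    rw [sub_eq_zero] at hd he
    subst hd he
    refine ⟨d, ?_⟩
    ext i
    fin_cases i
    · exact e0.symm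
    · exact e1.symm
    · exact e2.symm
    · exact e3.symm
    · exact e4.symm
    · exact e5.symm
  · rintro ⟨c, rfl⟩
    ext i; fin_cases i <;> simp [f2, f3] <;> ring

lemma Hyp.ex2 (H : Hyp u v w x y z) : Function.Exact (f2 u v w x y z) (f1 u v w x y z) := by
  intro q
  constructor
  · intro h
    simp only [f1, LinearMap.coe_mk, AddHom.coe_mk] at h
    obtain ⟨a, b, k0, k1, k2⟩ := H.HB (q 0 * (v * z - w * y) + q 1 * (w * x - u * z) +
      q 2 * (u * y - v * x)) (q 3 * (w * x - u * z) + q 4 * (u * y - v * x))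
      (q 5 * (u * y - v * x)) (by linear_combination h)
    obtain ⟨a', b', h5⟩ := H.hwz _ _ _ k2
    obtain ⟨c, e1, e2⟩ := H.r3 (a - a' * (u * y - v * x)) (b - b' * (u * y - v * x))
      (by rw [h5] at k2; linear_combination -k2)
    obtain rfl : a = a' * (u * y - v * x) + c * z := by linear_combination e1
    obtain rfl : b = b' * (u * y - v * x) - c * w := by linear_combination e2
    obtain ⟨α, β, l0, l1, l2⟩ := H.HB (-c) (q 3) (q 4 - a' * v - b' * y)
      (by linear_combination k1)
    obtain ⟨γ, δ, j0, j1, j2⟩ := H.HB (q 0) (q 1 - (α * u + β * x)) (q 2 - (a' * u + b' * x))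
      (by rw [← l0]; linear_combination k0)
    refine ⟨![γ, α, a', δ, β, b'], ?_⟩
    ext i
    fin_cases i <;> simp [f2]
    · linear_combination -j0
    · linear_combination -j1
    · linear_combination -j2
    · linear_combination -l1
    · linear_combination -l2
    · linear_combination -h5
  · rintro ⟨c, rfl⟩
    simp [f1, f2]; ring

lemma Hyp.inj3 (H : Hyp u v w x y z) : Function.Injective (f3 u v w x y z) := by
  rw [injective_iff_map_eq_zero]
  intro a h
  exact H.nx a (congrFun h 0)

variable (u v w x y z) in
abbrev II : Ideal S := Ideal.span {v * z - w * y, w * x - u * z, u * y - v * x}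

lemma mII1 : v * z - w * y ∈ II u v w x y z := Ideal.subset_span (by simp)
lemma mII2 : w * x - u * z ∈ II u v w x y z := Ideal.subset_span (by simp)
lemma mII3 : u * y - v * x ∈ II u v w x y z := Ideal.subset_span (by simp)

lemma ex1 : Function.Exact (f1 u v w x y z) (Submodule.mkQ (II u v w x y z ^ 2)) := by
  intro q
  rw [Submodule.mkQ_apply, Submodule.Quotient.mk_eq_zero]
  constructor
  · intro h
    have : II u v w x y z ^ 2 ≤ LinearMap.range (f1 u v w x y z) := by
      rw [pow_two, Ideal.mul_le]
      intro r hr s hs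
      obtain ⟨a, b, c, rfl⟩ := Submodule.mem_span_triple.1 hr
      obtain ⟨a', b', c', rfl⟩ := Submodule.mem_span_triple.1 hs
      refine ⟨![a * a', a * b' + b * a', a * c' + c * a', b * b', b * c' + c * b', c * c'], ?_⟩
      simp [f1]; ring
    exact this h
  · rintro ⟨q, rfl⟩
    simp only [f1, LinearMap.coe_mk, AddHom.coe_mk]
    have h1 := mII1 (u := u) (v := v) (w := w) (x := x) (y := y) (z := z)
    have h2 := mII2 (u := u) (v := v) (w := w) (x := x) (y := y) (z := z)
    have h3 := mII3 (u := u) (v := v) (w := w) (x := x) (y := y) (z := z)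
    refine add_mem (add_mem (add_mem (add_mem (add_mem ?_ ?_) ?_) ?_) ?_) ?_ <;>
      apply Ideal.mul_mem_left <;> rw [pow_two]
    · rw [pow_two]; exact Ideal.mul_mem_mul h1 h1
    · exact Ideal.mul_mem_mul h1 h2
    · exact Ideal.mul_mem_mul h1 h3
    · rw [pow_two]; exact Ideal.mul_mem_mul h2 h2
    · exact Ideal.mul_mem_mul h2 h3
    · rw [pow_two]; exact Ideal.mul_mem_mul h3 h3

/-! Koszul complex -/
def g1 (A B C : S) : (Fin 3 → S) →ₗ[S] S where
  toFun q := q 0 * A + q 1 * B + q 2 * C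
  map_add' p q := by simp only [Pi.add_apply]; ring
  map_smul' c q := by simp only [Pi.smul_apply, smul_eq_mul, RingHom.id_apply]; ring

def g2 (A B C : S) : (Fin 3 → S) →ₗ[S] (Fin 3 → S) where
  toFun q := ![q 1 * C - q 2 * B, q 2 * A - q 0 * C, q 0 * B - q 1 * A]
  map_add' p q := by ext i; fin_cases i <;> simp <;> ring
  map_smul' c q := by ext i; fin_cases i <;> simp <;> ring

def g3 (A B C : S) : S →ₗ[S] (Fin 3 → S) where
  toFun c := ![c * A, c * B, c * C]
  map_add' p q := by ext i; fin_cases i <;> simp <;> ring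
  map_smul' c q := by ext i; fin_cases i <;> simp <;> ring

lemma g12 (A B C : S) : g1 A B C ∘ₗ g2 A B C = 0 := by
  apply LinearMap.ext; intro q
  simp [g1, g2]; ring

lemma g23 (A B C : S) : g2 A B C ∘ₗ g3 A B C = 0 := by
  apply LinearMap.ext; intro q
  ext i; fin_cases i <;> simp [g2, g3] <;> ring

lemma g01 (m : ℕ) : Submodule.mkQ (II u v w x y z ^ (m + 2)) ∘ₗ
    g1 ((v * z - w * y) ^ (m+2)) ((w * x - u * z) ^ (m+2)) ((u * y - v * x) ^ (m+2)) = 0 := by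
  apply LinearMap.ext; intro q
  rw [LinearMap.comp_apply, LinearMap.zero_apply, Submodule.mkQ_apply,
    Submodule.Quotient.mk_eq_zero]
  simp only [g1, LinearMap.coe_mk, AddHom.coe_mk]
  refine add_mem (add_mem ?_ ?_) ?_ <;> apply Ideal.mul_mem_left <;> apply Ideal.pow_mem_pow
  · exact mII1
  · exact mII2
  · exact mII3

def t1aux (D E F : S) : (Fin 3 → S) →ₗ[S] (Fin 6 → S) where
  toFun q := ![q 0 * D, 0, 0, q 1 * E, 0, q 2 * F]
  map_add' p q := by ext i; fin_cases i <;> simp <;> ring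
  map_smul' c q := by ext i; fin_cases i <;> simp <;> ring

variable (u v w x y z) in
def t1 (m : ℕ) : (Fin 3 → S) →ₗ[S] (Fin 6 → S) :=
  t1aux ((v * z - w * y) ^ m) ((w * x - u * z) ^ m) ((u * y - v * x) ^ m)

variable (u v w x y z) in
def t2aux (A B C D E F : S) : (Fin 3 → S) →ₗ[S] (Fin 6 → S) where
  toFun q := ![q 1 * F * D * y * C + q 2 * D * E * z * B,
    q 0 * E * F * x * C + q 2 * D * E * z * A,
    q 0 * E * F * x * B + q 1 * F * D * y * A,
    -(q 1 * F * D * v * C + q 2 * D * E * w * B),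
    -(q 0 * E * F * u * C + q 2 * D * E * w * A),
    -(q 0 * E * F * u * B + q 1 * F * D * v * A)]
  map_add' p q := by ext i; fin_cases i <;> simp <;> ring
  map_smul' c q := by ext i; fin_cases i <;> simp <;> ring

variable (u v w x y z) in
def t2 (m : ℕ) : (Fin 3 → S) →ₗ[S] (Fin 6 → S) :=
  t2aux u v w x y z (v * z - w * y) (w * x - u * z) (u * y - v * x)
   ((v * z - w * y) ^ m) ((w * x - u * z) ^ m) ((u * y - v * x) ^ m)

variable (u v w x y z) in
def t3 (m : ℕ) : S →ₗ[S] S :=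
  LinearMap.mulLeft S (-((v * z - w * y) * (w * x - u * z) * (u * y - v * x)) ^ (m + 1))

lemma ht1 (m : ℕ) : f1 u v w x y z ∘ₗ t1 u v w x y z m = LinearMap.id ∘ₗ
   g1 ((v * z - w * y) ^ (m+2)) ((w * x - u * z) ^ (m+2)) ((u * y - v * x) ^ (m+2)) := by
  apply LinearMap.ext; intro q
  simp [f1, t1, t1aux, g1, pow_add]; ring

lemma ht2 (m : ℕ) : f2 u v w x y z ∘ₗ t2 u v w x y z m = t1 u v w x y z m ∘ₗ
   g2 ((v * z - w * y) ^ (m+2)) ((w * x - u * z) ^ (m+2)) ((u * y - v * x) ^ (m+2)) := by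
  apply LinearMap.ext; intro q
  simp only [pow_add, t2, t1]
  generalize (v * z - w * y) ^ m = D
  generalize (w * x - u * z) ^ m = E
  generalize (u * y - v * x) ^ m = F
  ext i; fin_cases i <;> simp [f2, t1aux, t2aux, g2] <;> ring

lemma ht3 (m : ℕ) : f3 u v w x y z ∘ₗ t3 u v w x y z m = t2 u v w x y z m ∘ₗ
   g3 ((v * z - w * y) ^ (m+2)) ((w * x - u * z) ^ (m+2)) ((u * y - v * x) ^ (m+2)) := by
  apply LinearMap.ext; intro q
  simp only [pow_add, t2, t3, mul_pow]
  generalize (v * z - w * y) ^ m = D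
  generalize (w * x - u * z) ^ m = E
  generalize (u * y - v * x) ^ m = F
  ext i; fin_cases i <;> simp [f3, t2aux, g3] <;> ring

/-! Koszul complex of length two -/
def k1 (A B : S) : (Fin 2 → S) →ₗ[S] S where
  toFun q := q 0 * A + q 1 * B
  map_add' p q := by simp only [Pi.add_apply]; ring
  map_smul' c q := by simp only [Pi.smul_apply, smul_eq_mul, RingHom.id_apply]; ring

def k2 (A B : S) : S →ₗ[S] (Fin 2 → S) where
  toFun c := ![c * B, - c * A]
  map_add' p q := by ext i; fin_cases i <;> simp <;> ring
  map_smul' c q := by ext i; fin_cases i <;> simp <;> ring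

lemma kex1 (A B : S) : Function.Exact (k1 A B) (Submodule.mkQ (Ideal.span {A, B})) := by
  intro q
  rw [Submodule.mkQ_apply, Submodule.Quotient.mk_eq_zero, Ideal.mem_span_pair]
  constructor
  · rintro ⟨a, b, h⟩
    exact ⟨![a, b], by simpa [k1] using h⟩
  · rintro ⟨q, h⟩
    exact ⟨q 0, q 1, h⟩

lemma kex2 (A B : S) (h : ∀ a b, a * A + b * B = 0 → ∃ c, a = c * B ∧ b = - c * A) :
    Function.Exact (k2 A B) (k1 A B) := by
  intro q
  constructor
  · intro hq
    obtain ⟨c, e1, e2⟩ := h _ _ hq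
    refine ⟨c, ?_⟩
    ext i
    fin_cases i
    · exact e1.symm
    · exact e2.symm
  · rintro ⟨c, rfl⟩
    simp [k1, k2]; ring

lemma koszul_of_relPrime [IsDomain S] [UniqueFactorizationMonoid S] {A B : S}
    (h : IsRelPrime A B) (hA : A ≠ 0) (a b : S)
    (hab : a * A + b * B = 0) : ∃ c, a = c * B ∧ b = - c * A := by
  have h1 : A ∣ b * B := ⟨-a, by linear_combination hab⟩
  obtain ⟨c, rfl⟩ := h.dvd_of_dvd_mul_right h1
  refine ⟨-c, ?_, by ring⟩
  apply mul_right_cancel₀ hA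
  linear_combination hab
end
end MinorsLC

end

section
open MvPolynomial
namespace MinorsLC
noncomputable section

lemma m1_ne : m1 ≠ 0 := by
  intro h
  have := congrArg (eval (![0, 1, 0, 0, 0, 1] : Fin 6 → ℂ)) h
  simp [m1] at this
lemma m2_ne : m2 ≠ 0 := by
  intro h
  have := congrArg (eval (![0, 0, 1, 1, 0, 0] : Fin 6 → ℂ)) h
  simp [m2] at this
lemma m3_ne : m3 ≠ 0 := by
  intro h
  have := congrArg (eval (![1, 0, 0, 0, 1, 0] : Fin 6 → ℂ)) h
  simp [m3] at this

def psi : A →ₐ[ℂ] A := aeval (![X 0, X 1, 0, X 3, X 4, 0] : Fin 6 → A)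

lemma psi_sub (f : A) : f - psi f ∈ Ideal.span {(X 2 : A), X 5} := by
  induction f using MvPolynomial.induction_on with
  | C a => simp [psi]
  | add p q hp hq =>
    rw [map_add, add_sub_add_comm]
    exact add_mem hp hq
  | mul_X p n hp =>
    have : p * X n - psi (p * X n) = X n * (p - psi p) + psi p * (X n - psi (X n)) := by
      rw [map_mul]; ring
    rw [this]
    refine add_mem (Ideal.mul_mem_left _ _ hp) (Ideal.mul_mem_left _ _ ?_)
    fin_cases n <;> simp [psi] <;> apply Ideal.subset_span <;> simp

lemma hwz (q a b : A) (h : q * m3 = a * X 2 + b * X 5) : ∃ a b : A, q = a * X 2 + b * X 5 := by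
  have h1 := congrArg psi h
  have h2 : psi m3 = m3 := by simp [psi, m3]
  have h3 : psi (X 2) = 0 := by simp [psi]
  have h4 : psi (X 5) = 0 := by simp [psi]
  rw [map_mul, map_add, map_mul, map_mul, h2, h3, h4, mul_zero, mul_zero, add_zero] at h1
  have h5 := (mul_eq_zero.1 h1).resolve_right m3_ne
  have h6 := psi_sub q
  rw [h5, sub_zero, Ideal.mem_span_pair] at h6
  obtain ⟨a, b, h⟩ := h6
  exact ⟨a, b, h.symm⟩

lemma regX (i j : Fin 6) (hij : i ≠ j) (a b : A) (h : a * X i + b * X j = 0) :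
    ∃ c : A, a = c * X j ∧ b = - c * X i := by
  have h1 : (X j : A) ∣ a * X i := ⟨-b, by linear_combination h⟩
  rcases X_prime.dvd_or_dvd h1 with h2 | h2
  · obtain ⟨c, rfl⟩ := h2
    refine ⟨c, by ring, ?_⟩
    apply mul_right_cancel₀ (X_ne_zero j : (X j : A) ≠ 0)
    linear_combination h
  · exact absurd (X_dvd_X.1 h2).symm hij

lemma deg_dvd {p f : A} (hf : f ≠ 0) (i : Fin 6) (h : p ∣ f) (h0 : degreeOf i f = 0) :
    degreeOf i p = 0 := by
  obtain ⟨c, rfl⟩ := h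
  rw [degreeOf_mul_eq (left_ne_zero_of_mul hf) (right_ne_zero_of_mul hf)] at h0
  omega

lemma deg_sub {p f : A} (i : Fin 6) (h : degreeOf i p = 0) (h0 : degreeOf i f = 0) :
    degreeOf i (p - f) = 0 := by
  have := degreeOf_sub_le i p f
  rw [h, h0] at this
  simpa using this

lemma deg_mul {p f : A} (i : Fin 6) (h : degreeOf i p = 0) (h0 : degreeOf i f = 0) :
    degreeOf i (p * f) = 0 := by
  have := degreeOf_mul_le i p f
  omega

lemma deg_X (i j : Fin 6) (h : i ≠ j) : degreeOf i (X j : A) = 0 := degreeOf_X_of_ne h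

lemma unit_of_dvd (p : A) (h1 : p ∣ m1) (h2 : p ∣ m2) : IsUnit p := by
  have hw : p ∣ X 2 * m3 := by
    have : X 2 * m3 = - X 0 * m1 - X 1 * m2 := by unfold m1 m2 m3; ring
    rw [this]
    exact dvd_sub (h1.mul_left _) (h2.mul_left _)
  have hz : p ∣ X 5 * m3 := by
    have : X 5 * m3 = - X 3 * m1 - X 4 * m2 := by unfold m1 m2 m3; ring
    rw [this]
    exact dvd_sub (h1.mul_left _) (h2.mul_left _)
  have hd : ∀ i, degreeOf i p = 0 := by
    intro i
    fin_cases i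
    · exact deg_dvd m1_ne _ h1 (deg_sub _ (deg_mul _ (deg_X _ _ (by decide)) (deg_X _ _ (by decide)))
        (deg_mul _ (deg_X _ _ (by decide)) (deg_X _ _ (by decide))))
    · exact deg_dvd m2_ne _ h2 (deg_sub _ (deg_mul _ (deg_X _ _ (by decide)) (deg_X _ _ (by decide)))
        (deg_mul _ (deg_X _ _ (by decide)) (deg_X _ _ (by decide))))
    · exact deg_dvd (mul_ne_zero (X_ne_zero _) m3_ne) _ hz (deg_mul _ (deg_X _ _ (by decide))
       (deg_sub _ (deg_mul _ (deg_X _ _ (by decide)) (deg_X _ _ (by decide)))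
        (deg_mul _ (deg_X _ _ (by decide)) (deg_X _ _ (by decide)))))
    · exact deg_dvd m1_ne _ h1 (deg_sub _ (deg_mul _ (deg_X _ _ (by decide)) (deg_X _ _ (by decide)))
        (deg_mul _ (deg_X _ _ (by decide)) (deg_X _ _ (by decide))))
    · exact deg_dvd m2_ne _ h2 (deg_sub _ (deg_mul _ (deg_X _ _ (by decide)) (deg_X _ _ (by decide)))
        (deg_mul _ (deg_X _ _ (by decide)) (deg_X _ _ (by decide))))
    · exact deg_dvd (mul_ne_zero (X_ne_zero _) m3_ne) _ hw (deg_mul _ (deg_X _ _ (by decide))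
       (deg_sub _ (deg_mul _ (deg_X _ _ (by decide)) (deg_X _ _ (by decide)))
        (deg_mul _ (deg_X _ _ (by decide)) (deg_X _ _ (by decide)))))
  have hp : p ≠ 0 := by
    rintro rfl
    exact m1_ne (zero_dvd_iff.1 h1)
  have hC : p = C (p.coeff 0) := by
    rw [← vars_eq_empty_iff_eq_C, Finset.eq_empty_iff_forall_notMem]
    intro i hi
    have := hd i
    rw [vars_def, Multiset.mem_toFinset, ← Multiset.count_pos, ← degreeOf_def] at hi
    omega
  rw [hC]
  apply IsUnit.map
  rw [isUnit_iff_ne_zero]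
  intro h
  rw [h, map_zero] at hC
  exact hp hC

lemma relPrime_m : IsRelPrime m1 m2 := fun p h1 h2 => unit_of_dvd p h1 h2

lemma hyp : Hyp (X 0 : A) (X 1) (X 2) (X 3) (X 4) (X 5) where
  hwz := hwz
  r1 := regX 0 3 (by decide)
  r2 := regX 1 4 (by decide)
  r3 := regX 2 5 (by decide)
  h12 a b h := by
    obtain ⟨c, h1, h2⟩ := koszul_of_relPrime relPrime_m m1_ne a b h
    refine ⟨-c, ?_, h2⟩
    rw [h1, neg_neg]; rfl
  n1 a h := (mul_eq_zero.1 h).resolve_right m1_ne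
  n2 a h := (mul_eq_zero.1 h).resolve_right m2_ne
  n3 a h := (mul_eq_zero.1 h).resolve_right m3_ne
  nx a h := (mul_eq_zero.1 h).resolve_right (X_ne_zero 3)

end
end MinorsLC

end

section
open CategoryTheory MvPolynomial Opposite
namespace MinorsLC
noncomputable section

abbrev I : Ideal A := II (X 0) (X 1) (X 2) (X 3) (X 4) (X 5)

abbrev qmap {J K : Ideal A} (h : J ≤ K) : ModuleCat.of A (A ⧸ J) ⟶ ModuleCat.of A (A ⧸ K) :=
  ModuleCat.ofHom (Submodule.mapQ J K LinearMap.id h)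

abbrev RR : ModuleCat.{0} A := ModuleCat.of A A

lemma hom_comm {X Y Z W : ModuleCat.{0} A} {f : X ⟶ Y} {g : Y ⟶ W} {h : X ⟶ Z} {k : Z ⟶ W}
    (e : f ≫ g = h ≫ k) : g.hom ∘ₗ f.hom = k.hom ∘ₗ h.hom := by
  have := congrArg ModuleCat.Hom.hom e
  simpa using this

lemma nonvanish : ∃ (P : ProjectiveResolution (ModuleCat.of A (A ⧸ I ^ 2)))
    (z : P.complex.X 3 ⟶ RR) (hz : P.complex.d 4 3 ≫ z = 0),
    ∀ (m : ℕ) (hs : I ^ (m + 2) ≤ I ^ 2),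
      ((Ext A (ModuleCat.{0} A) 3).map (qmap hs).op).app RR (cls P z hz) ≠ 0 := by
  obtain ⟨P⟩ := (inferInstance : HasProjectiveResolution (ModuleCat.of A (A ⧸ I ^ 2))).out
  have i0 := res_proj P 0
  have i1 := res_proj P 1
  have i2 := res_proj P 2
  have i3 := res_proj P 3
  obtain ⟨a0, a1, a2, a3, ha0, ha1, ha2, ha3⟩ := lift3 (aug P).hom (P.complex.d 1 0).hom
    (P.complex.d 2 1).hom (P.complex.d 3 2).hom (exact_comp (aug_exact P))
    (exact_comp (res_exact P 0)) (exact_comp (res_exact P 1))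
    (Submodule.mkQ (I ^ 2)) (f1 (X 0) (X 1) (X 2) (X 3) (X 4) (X 5))
    (f2 (X 0) (X 1) (X 2) (X 3) (X 4) (X 5)) (f3 (X 0) (X 1) (X 2) (X 3) (X 4) (X 5))
    (Submodule.mkQ_surjective _) ex1 hyp.ex2 hyp.ex3 LinearMap.id
  have hz : P.complex.d 4 3 ≫ (ModuleCat.ofHom a3 : P.complex.X 3 ⟶ RR) = 0 := by
    apply ModuleCat.hom_ext
    apply LinearMap.ext
    intro t
    apply hyp.inj3
    have h1 := LinearMap.congr_fun ha3 ((P.complex.d 4 3).hom t)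
    have h2 : (P.complex.d 3 2).hom ((P.complex.d 4 3).hom t) = 0 :=
      LinearMap.congr_fun (exact_comp (res_exact P 2)) t
    rw [LinearMap.comp_apply, LinearMap.comp_apply, h2, map_zero] at h1
    exact h1.trans (map_zero _).symm
  refine ⟨P, ModuleCat.ofHom a3, hz, ?_⟩
  intro m hs h0
  obtain ⟨P'⟩ := (inferInstance : HasProjectiveResolution (ModuleCat.of A (A ⧸ I ^ (m+2)))).out
  obtain ⟨φ, comm⟩ := exists_lift (qmap hs) P P'
  rw [cls_map (qmap hs) P P' _ hz φ comm] at h0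
  obtain ⟨y, hy⟩ := cls_zero _ _ _ h0
  have i0' := res_proj P' 0
  have i1' := res_proj P' 1
  have i2' := res_proj P' 2
  have i3' := res_proj P' 3
  obtain ⟨k, hk⟩ := chaseA (qmap hs).hom
    (aug P).hom (P.complex.d 1 0).hom (P.complex.d 2 1).hom (P.complex.d 3 2).hom
    (Submodule.mkQ (I ^ 2)) (f1 (X 0) (X 1) (X 2) (X 3) (X 4) (X 5))
    (f2 (X 0) (X 1) (X 2) (X 3) (X 4) (X 5)) (f3 (X 0) (X 1) (X 2) (X 3) (X 4) (X 5))
    ex1 hyp.ex2 hyp.ex3 hyp.inj3 a0 a1 a2 a3 ha0 ha1 ha2 ha3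
    (aug P').hom (P'.complex.d 1 0).hom (P'.complex.d 2 1).hom (P'.complex.d 3 2).hom
    (aug_surj P') (aug_exact P') (res_exact P' 0) (res_exact P' 1)
    (Submodule.mkQ (I ^ (m + 2))) (g1 (m1 ^ (m+2)) (m2 ^ (m+2)) (m3 ^ (m+2)))
    (g2 (m1 ^ (m+2)) (m2 ^ (m+2)) (m3 ^ (m+2))) (g3 (m1 ^ (m+2)) (m2 ^ (m+2)) (m3 ^ (m+2))) (g01 m) (g12 _ _ _) (g23 _ _ _)
    (φ.f 0).hom (φ.f 1).hom (φ.f 2).hom (φ.f 3).hom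
    (hom_comm comm) (hom_comm (φ.comm 1 0)) (hom_comm (φ.comm 2 1)) (hom_comm (φ.comm 3 2))
    LinearMap.id (t1 (X 0) (X 1) (X 2) (X 3) (X 4) (X 5) m)
    (t2 (X 0) (X 1) (X 2) (X 3) (X 4) (X 5) m) (t3 (X 0) (X 1) (X 2) (X 3) (X 4) (X 5) m)
    (by apply LinearMap.ext; intro t; rfl) (ht1 m) (ht2 m) (ht3 m) y.hom
    (congrArg ModuleCat.Hom.hom hy)
  have h1 := LinearMap.congr_fun hk 1
  have h2 : t3 (X 0 : A) (X 1) (X 2) (X 3) (X 4) (X 5) m 1 = - (m1 * m2 * m3) ^ (m + 1) := by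
    simp [t3, m1, m2, m3]
  have h3 : g3 (m1 ^ (m+2)) (m2 ^ (m+2)) (m3 ^ (m+2)) 1 =
      m1 ^ (m+2) • ![1, 0, 0] + m2 ^ (m+2) • ![0, 1, 0] + m3 ^ (m+2) • ![0, 0, 1] := by
    ext i; fin_cases i <;> simp [g3]
  rw [h2, LinearMap.comp_apply] at h1
  have h4 : - (m1 * m2 * m3) ^ (m + 1) = k (g3 (m1 ^ (m+2)) (m2 ^ (m+2)) (m3 ^ (m+2)) 1) := h1
  rw [h3, map_add, map_add, map_smul, map_smul, map_smul, smul_eq_mul, smul_eq_mul,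
    smul_eq_mul] at h4
  apply key (m + 1) (-k ![1, 0, 0]) (-k ![0, 1, 0]) (-k ![0, 0, 1])
  linear_combination -h4

lemma vanish (F G : A) (hF : F ≠ 0) (hFG : IsRelPrime F G) (hJ : Ideal.span {F, G} ≤ I ^ 2)
    (P : ProjectiveResolution (ModuleCat.of A (A ⧸ I ^ 2)))
    (z : P.complex.X 3 ⟶ RR) (hz : P.complex.d 4 3 ≫ z = 0) :
    ((Ext A (ModuleCat.{0} A) 3).map (qmap hJ).op).app RR (cls P z hz) = 0 := by
  obtain ⟨P'⟩ := (inferInstance : HasProjectiveResolution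
    (ModuleCat.of A (A ⧸ Ideal.span {F, G}))).out
  obtain ⟨φ, comm⟩ := exists_lift (qmap hJ) P P'
  rw [cls_map (qmap hJ) P P' _ hz φ comm]
  have i0' := res_proj P' 0
  have i1' := res_proj P' 1
  have i2' := res_proj P' 2
  have i3' := res_proj P' 3
  have hz' : P'.complex.d 4 3 ≫ φ.f 3 ≫ z = 0 := by
    rw [← φ.comm_assoc, hz, Limits.comp_zero]
  obtain ⟨y, hy⟩ := chaseB (aug P').hom (P'.complex.d 1 0).hom (P'.complex.d 2 1).hom
    (P'.complex.d 3 2).hom (P'.complex.d 4 3).hom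
    (aug_surj P') (aug_exact P') (res_exact P' 0) (res_exact P' 1) (res_exact P' 2)
    (Submodule.mkQ (Ideal.span {F, G})) (k1 F G) (k2 F G) (Submodule.mkQ_surjective _)
    (kex1 F G) (kex2 F G (koszul_of_relPrime hFG hF))
    (by
      rw [injective_iff_map_eq_zero]
      intro a ha
      have := congrFun ha 1
      have h' : -a * F = 0 := this
      have := (mul_eq_zero.1 h').resolve_right hF
      exact neg_eq_zero.1 this)
    (φ.f 3 ≫ z).hom (congrArg ModuleCat.Hom.hom hz')
  exact cls_bdry _ _ _ (ModuleCat.ofHom y) (ModuleCat.hom_ext hy)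

lemma partA : Nontrivial ((localCohomology I 3).obj RR) := by
  by_contra hn
  rw [not_nontrivial_iff_subsingleton] at hn
  obtain ⟨P, z, hz, h⟩ := nonvanish
  obtain ⟨s, hs, hst, h0⟩ := lc_zero I RR hn 2 (cls P z hz)
  obtain ⟨m, rfl⟩ := Nat.exists_eq_add_of_le' hst
  exact h m hs h0

lemma partB (f g : A) (hrad : (Ideal.span {f, g}).radical = I.radical) : False := by
  have hm1 : m1 ∈ I := mII1
  have hm2 : m2 ∈ I := mII2
  have hf : f ∈ (I ^ 2).radical := by
    rw [Ideal.radical_pow _ two_ne_zero, ← hrad]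
    exact Ideal.le_radical (Ideal.subset_span (by simp))
  have hg : g ∈ (I ^ 2).radical := by
    rw [Ideal.radical_pow _ two_ne_zero, ← hrad]
    exact Ideal.le_radical (Ideal.subset_span (by simp))
  obtain ⟨a, ha⟩ := hf
  obtain ⟨b, hb⟩ := hg
  have hF : f ^ (a + 1) ∈ I ^ 2 := by rw [pow_succ]; exact Ideal.mul_mem_right _ _ ha
  have hG : g ^ (b + 1) ∈ I ^ 2 := by rw [pow_succ]; exact Ideal.mul_mem_right _ _ hb
  set F := f ^ (a + 1) with hFdef
  set G := g ^ (b + 1) with hGdef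
  have hJ : Ideal.span {F, G} ≤ I ^ 2 := by
    rw [Ideal.span_le]
    rintro t (rfl | rfl)
    · exact hF
    · exact hG
  have hIJ : I ≤ (Ideal.span {F, G}).radical := by
    have h1 : Ideal.span {f, g} ≤ (Ideal.span {F, G}).radical := by
      rw [Ideal.span_le]
      rintro t (rfl | rfl)
      · exact ⟨a + 1, Ideal.subset_span (by simp [hFdef])⟩
      · exact ⟨b + 1, Ideal.subset_span (by simp [hGdef])⟩
    rw [← Ideal.radical_le_radical_iff] at h1
    exact Ideal.le_radical.trans (hrad.symm.le.trans h1)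
  have hd : ∀ p : A, Irreducible p → p ∣ F → ¬ p ∣ G := by
    intro p hp h1 h2
    have hpp := hp.prime
    have hle : Ideal.span {F, G} ≤ Ideal.span {p} := by
      rw [Ideal.span_le]
      rintro t (rfl | rfl)
      · exact Ideal.mem_span_singleton.2 h1
      · exact Ideal.mem_span_singleton.2 h2
    have hpr : (Ideal.span {p}).IsPrime := (Ideal.span_singleton_prime hpp.ne_zero).2 hpp
    have hIp : I ≤ Ideal.span {p} := hIJ.trans (hpr.radical_le_iff.2 hle)
    exact hp.not_isUnit (unit_of_dvd p (Ideal.mem_span_singleton.1 (hIp hm1))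
      (Ideal.mem_span_singleton.1 (hIp hm2)))
  have h0 : ¬ (F = 0 ∧ G = 0) := by
    rintro ⟨h1, h2⟩
    have := hIJ hm1
    rw [h1, h2] at this
    simp at this
    exact m1_ne this
  have hrel : IsRelPrime F G := WfDvdMonoid.isRelPrime_of_no_irreducible_factors h0 hd
  have hF0 : F ≠ 0 := by
    intro h
    rw [h, isRelPrime_zero_left] at hrel
    have h1 : Ideal.span {F, G} = ⊤ := Ideal.eq_top_of_isUnit_mem _
      (Ideal.subset_span (by simp)) hrel
    rw [h1, top_le_iff] at hJ
    have h2 : (1 : A) ∈ I := by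
      have : (1 : A) ∈ I ^ 2 := by rw [hJ]; trivial
      exact Ideal.pow_le_self two_ne_zero this
    have h3 : I ≤ RingHom.ker (eval (0 : Fin 6 → ℂ)) := by
      rw [Ideal.span_le]
      rintro t (rfl | rfl | rfl) <;> simp
    have h4 := h3 h2
    simp at h4
  obtain ⟨s, hs⟩ := Ideal.exists_pow_le_of_le_radical_of_fg hIJ (IsNoetherian.noetherian I)
  have hs' : I ^ (s + 2) ≤ Ideal.span {F, G} := (Ideal.pow_le_pow_right (by omega)).trans hs
  obtain ⟨P, z, hz, h⟩ := nonvanish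
  apply h s (hs'.trans hJ)
  have hv := vanish F G hF0 hrel hJ P z hz
  have hc : qmap (hs'.trans hJ) = qmap hs' ≫ qmap hJ := by
    ext
    rfl
  rw [hc, op_comp, Functor.map_comp, NatTrans.comp_app, ModuleCat.comp_apply, hv, map_zero]

end
end MinorsLC
end

open CategoryTheory MvPolynomial

theorem localCohomology_three_of_minors_ne_zero_complex :
    let R := MvPolynomial (Fin 6) ℂ
    let u : R := X 0; let v : R := X 1; let w : R := X 2
    let x : R := X 3; let y : R := X 4; let z : R := X 5
    let I : Ideal R := Ideal.span {v * z - w * y, w * x - u * z, u * y - v * x}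
    Nontrivial ((localCohomology I 3).obj (ModuleCat.of R R)) ∧
      ¬ ∃ f g : R, (Ideal.span {f, g}).radical = I.radical := by
  intro R u v w x y z I
  exact ⟨MinorsLC.partA, fun ⟨f, g, h⟩ => MinorsLC.partB f g h⟩
end
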